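/- Let V > 0, α > 0, β > 0, and let f(b) = (β^α / Γ(α))·b^(α−1)·exp(−βb) be the gamma density. Define F(b) = ∫₀ᵇ f(t) dt and s(b) = (V − b)·F(b). Then s attains a global maximum over [0, V] at some point b* ∈ (0, V), and no point of (0, V) is a local minimum of s on (0, V). -/

import Mathlib

/-!
Since `s' = (V - b) f - F = f ((V - b) - F / f)`, as soon as `F / f` is nondecreasing the bracket
is strictly decreasing, so after a critical point `s` strictly decreases and no critical point is
a local minimum. The substitution `t = b u` gives `F b / f b = ∫₀¹ b f(b u) / f(b) du`, and for the
gamma density the integrand is `u ^ (α - 1) * (b * exp (β * (1 - u) * b))`, which is nondecreasing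
in `b`. This treats the singular case `α < 1` and the log-concave case `α ≥ 1` alike.
-/

open Set MeasureTheory intervalIntegral

section LocalMin

variable {s w φ : ℝ → ℝ} {a b c : ℝ}

theorem not_isLocalMin_of_strictAntiOn_Ico (hbc : b < c) (hs : StrictAntiOn s (Ico b c)) :
    ¬ IsLocalMin s b := by
  intro hmin
  have hright : ∀ᶠ x in nhdsWithin b (Ioi b), s b ≤ s x := hmin.filter_mono nhdsWithin_le_nhds
  obtain ⟨x, hle, hx⟩ := (hright.and (Ioo_mem_nhdsGT hbc)).exists
  exact hle.not_gt (hs (left_mem_Ico.2 hbc) (Ioo_subset_Ico_self hx) hx.1)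

theorem not_isLocalMin_of_hasDerivAt_mul_strictAntiOn
    (hderiv : ∀ x ∈ Ioo a c, HasDerivAt s (w x * φ x) x) (hw : ∀ x ∈ Ioo a c, 0 < w x)
    (hφ : StrictAntiOn φ (Ioo a c)) (hb : b ∈ Ioo a c) : ¬ IsLocalMin s b := by
  intro hmin
  have hφb : φ b = 0 :=
    (mul_eq_zero.1 (hmin.hasDerivAt_eq_zero (hderiv b hb))).resolve_left (hw b hb).ne'
  have hsub : Ico b c ⊆ Ioo a c := Ico_subset_Ioo_left hb.1
  have hanti : StrictAntiOn s (Ico b c) := by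
    refine strictAntiOn_of_deriv_neg (convex_Ico b c)
      (fun x hx => (hderiv x (hsub hx)).continuousAt.continuousWithinAt) fun x hx => ?_
    rw [interior_Ico] at hx
    have hxac : x ∈ Ioo a c := hsub (Ioo_subset_Ico_self hx)
    rw [(hderiv x hxac).deriv]
    exact mul_neg_of_pos_of_neg (hw x hxac) (hφb ▸ hφ hb hxac hx.1)
  exact not_isLocalMin_of_strictAntiOn_Ico hb.2 hanti hmin

end LocalMin

theorem intervalIntegrable_left_of_mem_Icc {E : Type*} [NormedAddCommGroup E] {f : ℝ → E}
    {μ : Measure ℝ} {a b c : ℝ} (hf : IntervalIntegrable f μ a c) (hb : b ∈ Icc a c) :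
    IntervalIntegrable f μ a b :=
  hf.mono_set (uIcc_subset_uIcc_left (Icc_subset_uIcc hb))

/-- The expected surplus `s(b) = (V - b) F(b)` of a bid `b` on an item of value `V`, when the
minimum winning price has density `f` on `(0, ∞)`. The distribution function `F` is encoded as the
integral of `f` from `0`, so for `b ≥ 0` the values of `f` on the negative half-line play
no role. -/
noncomputable def expectedSurplus (V : ℝ) (f : ℝ → ℝ) (b : ℝ) : ℝ :=
  (V - b) * ∫ t in (0 : ℝ)..b, f t

section ExpectedSurplus

variable {V b : ℝ} {f : ℝ → ℝ}

theorem continuousOn_expectedSurplus (hint : IntervalIntegrable f volume 0 V) :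
    ContinuousOn (expectedSurplus V f) (uIcc 0 V) :=
  (continuousOn_const.sub continuousOn_id).mul
    (continuousOn_primitive_interval' hint left_mem_uIcc)

theorem expectedSurplus_pos (hint : IntervalIntegrable f volume 0 V)
    (hpos : ∀ t ∈ Ioo 0 V, 0 < f t) (hb : b ∈ Ioo 0 V) : 0 < expectedSurplus V f b :=
  mul_pos (sub_pos.2 hb.2)
    (intervalIntegral_pos_of_pos_on
      (intervalIntegrable_left_of_mem_Icc hint (Ioo_subset_Icc_self hb))
      (fun t ht => hpos t ⟨ht.1, ht.2.trans hb.2⟩) hb.1)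

theorem exists_isMaxOn_expectedSurplus (hV : 0 < V) (hint : IntervalIntegrable f volume 0 V)
    (hpos : ∀ t ∈ Ioo 0 V, 0 < f t) :
    ∃ b ∈ Ioo 0 V, IsMaxOn (expectedSurplus V f) (Icc 0 V) b := by
  obtain ⟨c, hc⟩ := nonempty_Ioo.2 hV
  have hcont := continuousOn_expectedSurplus hint
  rw [uIcc_of_le hV.le] at hcont
  refine isCompact_Icc.exists_isMaxOn_mem_subset hcont (Ioo_subset_Icc_self hc) fun b hb => ?_
  have hzero : expectedSurplus V f b = 0 := by
    rw [Icc_sdiff_Ioo_same hV.le] at hb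
    rcases hb with rfl | rfl <;> simp [expectedSurplus]
  exact hzero ▸ expectedSurplus_pos hint hpos hc

theorem hasDerivAt_expectedSurplus (hint : IntervalIntegrable f volume 0 V)
    (hcont : ContinuousOn f (Ioo 0 V)) (hb : b ∈ Ioo 0 V) :
    HasDerivAt (expectedSurplus V f) ((V - b) * f b - ∫ t in (0 : ℝ)..b, f t) b := by
  have hF : HasDerivAt (fun x => ∫ t in (0 : ℝ)..x, f t) (f b) b :=
    integral_hasDerivAt_right (intervalIntegrable_left_of_mem_Icc hint (Ioo_subset_Icc_self hb))
      (hcont.stronglyMeasurableAtFilter isOpen_Ioo b hb)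
      (hcont.continuousAt (isOpen_Ioo.mem_nhds hb))
  exact (((hasDerivAt_id' b).const_sub V).mul hF).congr_deriv (by ring)

theorem not_isLocalMin_expectedSurplus (hint : IntervalIntegrable f volume 0 V)
    (hcont : ContinuousOn f (Ioo 0 V)) (hpos : ∀ t ∈ Ioo 0 V, 0 < f t)
    (hmono : MonotoneOn (fun b => (∫ t in (0 : ℝ)..b, f t) / f b) (Ioo 0 V))
    (hb : b ∈ Ioo 0 V) : ¬ IsLocalMin (expectedSurplus V f) b := by
  have hanti : StrictAntiOn (fun x => (V - x) - (∫ t in (0 : ℝ)..x, f t) / f x) (Ioo 0 V) :=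
    fun x hx y hy hxy => by linarith only [hxy, hmono hx hy hxy.le]
  refine not_isLocalMin_of_hasDerivAt_mul_strictAntiOn (fun x hx => ?_) hpos hanti hb
  have hfx : f x ≠ 0 := (hpos x hx).ne'
  convert hasDerivAt_expectedSurplus hint hcont hx using 1
  field_simp

end ExpectedSurplus

section ScaledRatio

variable {f : ℝ → ℝ} {V : ℝ}

theorem integral_div_eq_integral_scaled_ratio (f : ℝ → ℝ) (b : ℝ) :
    (∫ t in (0 : ℝ)..b, f t) / f b = ∫ u in (0 : ℝ)..1, b * f (b * u) / f b := by
  rw [intervalIntegral.integral_div, intervalIntegral.integral_const_mul,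
    mul_integral_comp_mul_left, mul_zero, mul_one]

theorem monotoneOn_integral_div_of_scaled_ratio (hint : IntervalIntegrable f volume 0 V)
    (hmono : ∀ u ∈ Ioo (0 : ℝ) 1, MonotoneOn (fun b => b * f (b * u) / f b) (Ioo 0 V)) :
    MonotoneOn (fun b => (∫ t in (0 : ℝ)..b, f t) / f b) (Ioo 0 V) := by
  have hint_ratio : ∀ b ∈ Ioo 0 V,
      IntervalIntegrable (fun u => b * f (b * u) / f b) volume 0 1 := by
    intro b hb
    have hscaled :=
      (intervalIntegrable_left_of_mem_Icc hint (Ioo_subset_Icc_self hb)).comp_mul_left (c := b)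
    rw [zero_div, div_self hb.1.ne'] at hscaled
    exact (hscaled.const_mul b).div_const (f b)
  intro x hx y hy hxy
  simp only [integral_div_eq_integral_scaled_ratio f]
  exact integral_mono_on_of_le_Ioo zero_le_one (hint_ratio x hx) (hint_ratio y hy)
    fun u hu => hmono u hu hx hy hxy

end ScaledRatio

/-- The gamma density with shape `α` and rate `β`. Unlike `ProbabilityTheory.gammaPDFReal`, it is
not truncated to `0` on the negative half-line. -/
noncomputable def gammaDensity (α β b : ℝ) : ℝ :=
  β ^ α / Real.Gamma α * b ^ (α - 1) * Real.exp (-β * b)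

section GammaDensity

variable {α β : ℝ}

theorem gammaDensity_pos (hα : 0 < α) (hβ : 0 < β) {b : ℝ} (hb : 0 < b) :
    0 < gammaDensity α β b := by
  unfold gammaDensity
  positivity

theorem continuousOn_gammaDensity (α β : ℝ) : ContinuousOn (gammaDensity α β) (Ioi 0) := by
  have hrpow : ContinuousOn (fun b : ℝ => b ^ (α - 1)) (Ioi 0) :=
    continuousOn_id.rpow_const fun b hb => Or.inl (ne_of_gt hb)
  unfold gammaDensity
  fun_prop

theorem intervalIntegrable_gammaDensity (hα : 0 < α) (β a b : ℝ) :
    IntervalIntegrable (gammaDensity α β) volume a b :=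
  ((intervalIntegrable_rpow' (by linarith)).const_mul _).mul_continuousOn (by fun_prop)

theorem gammaDensity_mul_div_gammaDensity (hα : 0 < α) (hβ : 0 < β) {b u : ℝ} (hb : 0 < b)
    (hu : 0 ≤ u) :
    gammaDensity α β (b * u) / gammaDensity α β b
      = u ^ (α - 1) * Real.exp (β * (1 - u) * b) := by
  rw [div_eq_iff (gammaDensity_pos hα hβ hb).ne']
  have hexp : Real.exp (-β * (b * u)) = Real.exp (β * (1 - u) * b) * Real.exp (-β * b) := by
    rw [← Real.exp_add]
    ring_nf
  rw [gammaDensity, gammaDensity, hexp, Real.mul_rpow hb.le hu]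
  ring

theorem monotoneOn_gammaDensity_scaled_ratio (hα : 0 < α) (hβ : 0 < β) {u : ℝ}
    (hu : u ∈ Icc (0 : ℝ) 1) :
    MonotoneOn (fun b => b * gammaDensity α β (b * u) / gammaDensity α β b) (Ioi 0) := by
  intro x (hx : 0 < x) y (hy : 0 < y) hxy
  have hu_nonneg : 0 ≤ u := hu.1
  have hu_compl : 0 ≤ 1 - u := sub_nonneg.2 hu.2
  simp only [mul_div_assoc, gammaDensity_mul_div_gammaDensity hα hβ hx hu.1,
    gammaDensity_mul_div_gammaDensity hα hβ hy hu.1]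
  gcongr

theorem monotoneOn_integral_gammaDensity_div (hα : 0 < α) (hβ : 0 < β) (V : ℝ) :
    MonotoneOn (fun b => (∫ t in (0 : ℝ)..b, gammaDensity α β t) / gammaDensity α β b)
      (Ioo 0 V) :=
  monotoneOn_integral_div_of_scaled_ratio (intervalIntegrable_gammaDensity hα β 0 V) fun _ hu =>
    (monotoneOn_gammaDensity_scaled_ratio hα hβ (Ioo_subset_Icc_self hu)).mono Ioo_subset_Ioi_self

end GammaDensity

/-- For the gamma density f(b) = β^α/Γ(α) · b^(α-1) · exp(-βb),
the expected surplus s attains a global maximum over [0, V] at some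
b* ∈ (0, V), and no point of (0, V) is a local minimum of s on (0, V). -/
theorem surplus_global_max_gamma (V α β : ℝ) (hV : 0 < V) (hα : 0 < α) (hβ : 0 < β)
    (f F s : ℝ → ℝ)
    (hf : f = fun b => β ^ α / Real.Gamma α * b ^ (α - 1) * Real.exp (-β * b))
    (hF : F = fun b => ∫ t in (0 : ℝ)..b, f t)
    (hs : s = fun b => (V - b) * F b) :
    (∃ bStar ∈ Set.Ioo (0 : ℝ) V, ∀ b ∈ Set.Icc (0 : ℝ) V, s b ≤ s bStar) ∧
    ∀ b ∈ Set.Ioo (0 : ℝ) V, ¬ IsLocalMinOn s (Set.Ioo (0 : ℝ) V) b := by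
  obtain rfl : f = gammaDensity α β := hf
  obtain rfl : s = expectedSurplus V (gammaDensity α β) := by rw [hs, hF]; rfl
  have hint := intervalIntegrable_gammaDensity hα β 0 V
  have hpos : ∀ t ∈ Ioo 0 V, 0 < gammaDensity α β t := fun t ht => gammaDensity_pos hα hβ ht.1
  have hcont : ContinuousOn (gammaDensity α β) (Ioo 0 V) :=
    (continuousOn_gammaDensity α β).mono Ioo_subset_Ioi_self
  have hmono := monotoneOn_integral_gammaDensity_div hα hβ V
  exact ⟨exists_isMaxOn_expectedSurplus hV hint hpos, fun b hb hmin =>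
    not_isLocalMin_expectedSurplus hint hcont hpos hmono hb
      (hmin.isLocalMin (isOpen_Ioo.mem_nhds hb))⟩
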